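/- One has Σ_{m=0}^{∞} ∫_0^1 ( m·(x − x²)^m + x·(x − x²)^m/(1 − x + x²) ) dx = ∫_0^1 (2x − x²)/(1 − x + x²)² dx = 1. -/

import Mathlib

open intervalIntegral

open MeasureTheory Set
open scoped NNReal

/-!
For each `x` the series combines `∑ m, m * u ^ m` and `∑ m, u ^ m` at `u = x - x ^ 2`, with sum
`(u + x) / (1 - u) ^ 2`. Replacing `u` by its bound `1 / 4` and `x` by `|x|` gives a dominating
series of the same shape, so sum and integral may be exchanged. The sum has the antiderivative
`(x - 1) / (1 - x + x ^ 2)`, which goes from `-1` at `0` to `0` at `1`.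
-/

section Geometric

variable {𝕜 : Type*} [NormedDivisionRing 𝕜]

theorem hasSum_coe_mul_pow_add_mul_pow_div {r : 𝕜} (hr : ‖r‖ < 1) (c : 𝕜) :
    HasSum (fun m : ℕ => (m : 𝕜) * r ^ m + c * r ^ m / (1 - r)) ((r + c) / (1 - r) ^ 2) := by
  have hcoe : HasSum (fun m : ℕ => (m : 𝕜) * r ^ m) (r / (1 - r) ^ 2) :=
    hasSum_coe_mul_geometric_of_norm_lt_one hr
  have hgeom : HasSum (fun m : ℕ => c * r ^ m / (1 - r)) (c * (1 - r)⁻¹ / (1 - r)) :=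
    ((hasSum_geometric_of_norm_lt_one hr).mul_left c).div_const (1 - r)
  have hsum : r / (1 - r) ^ 2 + c * (1 - r)⁻¹ / (1 - r) = (r + c) / (1 - r) ^ 2 := by
    simp only [div_eq_mul_inv, sq, mul_inv_rev, add_mul, mul_assoc]
  exact hsum ▸ hcoe.add hgeom

theorem norm_coe_mul_pow_add_mul_pow_div_le {r : 𝕜} {q : ℝ} (hrq : ‖r‖ ≤ q) (hq : q < 1) (c : 𝕜)
    (m : ℕ) :
    ‖(m : 𝕜) * r ^ m + c * r ^ m / (1 - r)‖ ≤ m * q ^ m + ‖c‖ * q ^ m / (1 - q) := by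
  have hcast : ‖(m : 𝕜)‖ ≤ m := by simpa using Nat.norm_cast_le (α := 𝕜) m
  have hq_nonneg : 0 ≤ q := (norm_nonneg r).trans hrq
  have : 0 < 1 - q := sub_pos.mpr hq
  have hsub : 1 - q ≤ ‖1 - r‖ := by
    have := norm_sub_norm_le 1 r
    rw [norm_one] at this
    linarith
  calc ‖(m : 𝕜) * r ^ m + c * r ^ m / (1 - r)‖
      ≤ ‖(m : 𝕜)‖ * ‖r‖ ^ m + ‖c‖ * ‖r‖ ^ m / ‖1 - r‖ := by
        simpa only [norm_mul, norm_div, norm_pow] using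
          norm_add_le ((m : 𝕜) * r ^ m) (c * r ^ m / (1 - r))
    _ ≤ m * q ^ m + ‖c‖ * q ^ m / (1 - q) := by gcongr

end Geometric

theorem hasSum_integral_coe_mul_pow_add_mul_pow_div {α 𝕜 : Type*} [RCLike 𝕜] [MeasurableSpace α]
    {μ : Measure α} [IsFiniteMeasure μ] {u c : α → 𝕜} {q : ℝ≥0} (hu : AEStronglyMeasurable u μ)
    (hc : Integrable c μ) (huq : ∀ᵐ x ∂μ, ‖u x‖ ≤ q) (hq : q < 1) :
    HasSum (fun m : ℕ => ∫ x, (m : 𝕜) * u x ^ m + c x * u x ^ m / (1 - u x) ∂μ)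
      (∫ x, (u x + c x) / (1 - u x) ^ 2 ∂μ) := by
  have hq_lt : (q : ℝ) < 1 := mod_cast hq
  have hbound (x : α) : HasSum (fun m : ℕ => (m : ℝ) * (q : ℝ) ^ m + ‖c x‖ * (q : ℝ) ^ m / (1 - q))
      ((q + ‖c x‖) / (1 - q) ^ 2) :=
    hasSum_coe_mul_pow_add_mul_pow_div (by simpa using hq_lt) ‖c x‖
  refine hasSum_integral_of_dominated_convergence
    (fun m x => (m : ℝ) * (q : ℝ) ^ m + ‖c x‖ * (q : ℝ) ^ m / (1 - q)) (fun m => ?_) (fun m => ?_)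
    (.of_forall fun x => (hbound x).summable) ?_ ?_
  · exact ((hu.pow m).const_mul _).add
      ((hc.1.mul (hu.pow m)).div₀ (aestronglyMeasurable_const.sub hu))
  · filter_upwards [huq] with x hx using norm_coe_mul_pow_add_mul_pow_div_le hx hq_lt (c x) m
  · simp only [(hbound _).tsum_eq]
    exact ((integrable_const _).add hc.norm).div_const _
  · filter_upwards [huq] with x hx using
      hasSum_coe_mul_pow_add_mul_pow_div (hx.trans_lt hq_lt) (c x)

theorem one_sub_add_sq_pos {R : Type*} [CommRing R] [LinearOrder R] [IsStrictOrderedRing R]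
    (x : R) : 0 < 1 - x + x ^ 2 := by
  nlinarith [sq_nonneg (2 * x - 1)]

theorem hasDerivAt_sub_one_div_one_sub_add_sq {𝕜 : Type*} [NontriviallyNormedField 𝕜] {x : 𝕜}
    (hx : 1 - x + x ^ 2 ≠ 0) :
    HasDerivAt (fun y : 𝕜 => (y - 1) / (1 - y + y ^ 2))
      ((2 * x - x ^ 2) / (1 - x + x ^ 2) ^ 2) x := by
  have hnum : HasDerivAt (fun y : 𝕜 => y - 1) 1 x := (hasDerivAt_id' x).sub_const 1
  have hden : HasDerivAt (fun y : 𝕜 => 1 - y + y ^ 2) (-1 + 2 * x) x := by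
    simpa using ((hasDerivAt_id' x).const_sub 1).fun_add (hasDerivAt_pow 2 x)
  have hquot : 2 * x - x ^ 2 = 1 * (1 - x + x ^ 2) - (x - 1) * (-1 + 2 * x) := by ring
  exact hquot ▸ hnum.fun_div hden hx

theorem integral_two_mul_sub_sq_div_one_sub_add_sq_sq (a b : ℝ) :
    ∫ x in a..b, (2 * x - x ^ 2) / (1 - x + x ^ 2) ^ 2 =
      (b - 1) / (1 - b + b ^ 2) - (a - 1) / (1 - a + a ^ 2) := by
  have hden (x : ℝ) : 1 - x + x ^ 2 ≠ 0 := (one_sub_add_sq_pos x).ne'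
  have hcont : Continuous fun x : ℝ => (2 * x - x ^ 2) / (1 - x + x ^ 2) ^ 2 :=
    Continuous.div (by fun_prop) (by fun_prop) fun x => pow_ne_zero 2 (hden x)
  exact integral_eq_sub_of_hasDerivAt
    (fun x _ => hasDerivAt_sub_one_div_one_sub_add_sq (hden x)) (hcont.intervalIntegrable a b)

theorem abs_sub_sq_le_one_fourth {R : Type*} [Field R] [LinearOrder R] [IsStrictOrderedRing R]
    {x : R} (hx : x ∈ Icc 0 1) : |x - x ^ 2| ≤ 1 / 4 := by
  have hnonneg : 0 ≤ x - x ^ 2 := by nlinarith [hx.1, hx.2]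
  rw [abs_of_nonneg hnonneg]
  nlinarith [sq_nonneg (x - 1 / 2)]

theorem hasSum_integral_coe_mul_sub_sq_pow_add_mul_sub_sq_pow_div :
    HasSum (fun m : ℕ => ∫ x in (0 : ℝ)..1,
        ((m : ℝ) * (x - x ^ 2) ^ m + x * (x - x ^ 2) ^ m / (1 - x + x ^ 2)))
      (∫ x in (0 : ℝ)..1, (2 * x - x ^ 2) / (1 - x + x ^ 2) ^ 2) := by
  have hden (x : ℝ) : 1 - x + x ^ 2 = 1 - (x - x ^ 2) := by ring
  have hnum (x : ℝ) : 2 * x - x ^ 2 = x - x ^ 2 + x := by ring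
  have hle : ∀ᵐ x ∂volume.restrict (Ioc (0 : ℝ) 1), ‖x - x ^ 2‖ ≤ (1 / 4 : ℝ≥0) := by
    filter_upwards [ae_restrict_mem measurableSet_Ioc] with x hx
    simpa using abs_sub_sq_le_one_fourth (Ioc_subset_Icc_self hx)
  simp only [integral_of_le zero_le_one, hden, hnum]
  exact hasSum_integral_coe_mul_pow_add_mul_pow_div (by fun_prop)
    continuous_id.integrableOn_Ioc hle (by norm_num)

/-- `Σ_{m=0}^∞ ∫_0^1 (m (x−x²)^m + x (x−x²)^m/(1−x+x²)) dx = ∫_0^1 (2x−x²)/(1−x+x²)² dx = 1`. -/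
theorem stmt14 :
    (∑' m : ℕ, ∫ x in (0 : ℝ)..1,
        ((m : ℝ) * (x - x ^ 2) ^ m + x * (x - x ^ 2) ^ m / (1 - x + x ^ 2)))
      = ∫ x in (0 : ℝ)..1, (2 * x - x ^ 2) / (1 - x + x ^ 2) ^ 2 ∧
    (∫ x in (0 : ℝ)..1, (2 * x - x ^ 2) / (1 - x + x ^ 2) ^ 2) = 1 := by
  refine ⟨hasSum_integral_coe_mul_sub_sq_pow_add_mul_sub_sq_pow_div.tsum_eq, ?_⟩
  rw [integral_two_mul_sub_sq_div_one_sub_add_sq_sq]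
  norm_num
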